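/- Assume H_search admits an orthonormal eigenbasis ψ_1,…,ψ_n with real eigenvalues E_1,…,E_n such that E_α ≠ r·λ_i for all α and i, set γ_α = ⟨w, ψ_α⟩, and assume a_n ≠ 0. Then Σ_{α=1}^{n} |γ_α|²/(E_α − r·λ_n) = 1. -/

import Mathlib

open Matrix BigOperators

/-!
Pairing the eigenvalue equation of `T + |w⟩⟨w|` at `ψ_α` with an eigenvector `v` of `T` gives
`⟨v, ψ_α⟩ = ⟨v, w⟩ ⟨w, ψ_α⟩ / (E_α - μ)`. Substituting this into Parseval's expansion
`⟨v, w⟩ = ∑ α, ⟨v, ψ_α⟩ ⟨ψ_α, w⟩` and cancelling `⟨v, w⟩` leaves the identity.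
-/

section InnerProductSpace

open InnerProductSpace

variable {𝕜 F : Type*} [RCLike 𝕜] [NormedAddCommGroup F] [InnerProductSpace 𝕜 F]
  {T : F →ₗ[𝕜] F} {v w : F} {μ : ℝ}

theorem sub_mul_inner_eq_of_add_rankOne_apply_eq_smul {x : F} {e : 𝕜} (hT : T.IsSymmetric)
    (hv : T v = (μ : 𝕜) • v) (hx : (T + rankOne 𝕜 w w) x = e • x) :
    (e - μ) * ⟪v, x⟫_𝕜 = ⟪v, w⟫_𝕜 * ⟪w, x⟫_𝕜 := by
  have hpair : e * ⟪v, x⟫_𝕜 = μ * ⟪v, x⟫_𝕜 + ⟪w, x⟫_𝕜 * ⟪v, w⟫_𝕜 :=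
    calc e * ⟪v, x⟫_𝕜 = ⟪v, (T + rankOne 𝕜 w w) x⟫_𝕜 := by rw [hx, inner_smul_right]
      _ = ⟪T v, x⟫_𝕜 + ⟪w, x⟫_𝕜 * ⟪v, w⟫_𝕜 := by
          simp [hT v x, inner_add_right, inner_smul_right]
      _ = μ * ⟪v, x⟫_𝕜 + ⟪w, x⟫_𝕜 * ⟪v, w⟫_𝕜 := by
          rw [hv, inner_smul_left, RCLike.conj_ofReal]
  linear_combination hpair

theorem initial_amplitude_identity_general {ι : Type*} {E : ι → ℝ} (hT : T.IsSymmetric)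
    (hv : T v = (μ : 𝕜) • v) (ψ : HilbertBasis ι 𝕜 F)
    (hψ : ∀ α, (T + rankOne 𝕜 w w) (ψ α) = (E α : 𝕜) • ψ α) (hE : ∀ α, E α ≠ μ)
    (hvw : ⟪v, w⟫_𝕜 ≠ 0) :
    HasSum (fun α ↦ ‖⟪w, ψ α⟫_𝕜‖ ^ 2 / (E α - μ)) 1 := by
  have parseval_term (α : ι) : ⟪v, ψ α⟫_𝕜 * ⟪ψ α, w⟫_𝕜 =
      ⟪v, w⟫_𝕜 * ((‖⟪w, ψ α⟫_𝕜‖ ^ 2 / (E α - μ) : ℝ) : 𝕜) := by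
    have hgap : (E α : 𝕜) - μ ≠ 0 := sub_ne_zero.mpr (mod_cast hE α)
    have hpair := sub_mul_inner_eq_of_add_rankOne_apply_eq_smul hT hv (hψ α)
    rw [RCLike.ofReal_div, RCLike.ofReal_pow, ← RCLike.mul_conj, inner_conj_symm,
      RCLike.ofReal_sub, mul_div_assoc', eq_div_iff hgap]
    linear_combination ⟪ψ α, w⟫_𝕜 * hpair
  have parseval := ψ.hasSum_inner_mul_inner v w
  simp only [parseval_term] at parseval
  rw [← RCLike.hasSum_ofReal (𝕜 := 𝕜), RCLike.ofReal_one, ← hasSum_mul_left_iff hvw, mul_one]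
  exact parseval

end InnerProductSpace

section Matrix

variable {𝕜 ι : Type*} [RCLike 𝕜] [Fintype ι] [DecidableEq ι]

theorem exists_orthonormalBasis_eq_toLp {ψ : ι → ι → 𝕜}
    (hψ : ∀ α β, star (ψ α) ⬝ᵥ ψ β = if α = β then 1 else 0) :
    ∃ b : OrthonormalBasis ι 𝕜 (EuclideanSpace 𝕜 ι), ∀ α, b α = WithLp.toLp 2 (ψ α) := by
  have orthonormal : Orthonormal 𝕜 fun α ↦ WithLp.toLp 2 (ψ α) := by
    simpa only [orthonormal_iff_ite, EuclideanSpace.inner_toLp_toLp, dotProduct_comm] using hψ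
  have span_eq_top := orthonormal.linearIndependent.span_eq_top_of_card_eq_finrank' (by simp)
  exact ⟨.mk orthonormal span_eq_top.ge, fun α ↦ by rw [OrthonormalBasis.coe_mk]⟩

theorem toEuclideanLin_vecMulVec_star {κ : Type*} [Fintype κ] (x : κ → 𝕜) (y : ι → 𝕜) :
    toEuclideanLin (vecMulVec x (star y)) =
      InnerProductSpace.rankOne 𝕜 (WithLp.toLp 2 x) (WithLp.toLp 2 y) := by
  rw [← LinearEquiv.eq_symm_apply, InnerProductSpace.symm_toEuclideanLin_rankOne]

theorem sum_norm_dotProduct_sq_div_sub_eq_one {A : Matrix ι ι 𝕜} (hA : A.IsHermitian)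
    {v w : ι → 𝕜} {μ : ℝ} (hv : A *ᵥ v = (μ : 𝕜) • v) {ψ : ι → ι → 𝕜} {E : ι → ℝ}
    (hortho : ∀ α β, star (ψ α) ⬝ᵥ ψ β = if α = β then 1 else 0)
    (hψ : ∀ α, (A + vecMulVec w (star w)) *ᵥ ψ α = (E α : 𝕜) • ψ α) (hE : ∀ α, E α ≠ μ)
    (hvw : star v ⬝ᵥ w ≠ 0) :
    ∑ α, ‖star w ⬝ᵥ ψ α‖ ^ 2 / (E α - μ) = 1 := by
  obtain ⟨b, hb⟩ := exists_orthonormalBasis_eq_toLp hortho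
  have identity : HasSum
      (fun α ↦ ‖inner 𝕜 (WithLp.toLp 2 w) (b.toHilbertBasis α)‖ ^ 2 / (E α - μ)) 1 := by
    refine initial_amplitude_identity_general (T := toEuclideanLin A) (v := WithLp.toLp 2 v)
      (isSymmetric_toEuclideanLin_iff.mpr hA) ?_ b.toHilbertBasis (fun α ↦ ?_) hE ?_
    · rw [toLpLin_toLp, toLin'_apply, hv, WithLp.toLp_smul]
    · rw [← toEuclideanLin_vecMulVec_star, ← map_add, b.coe_toHilbertBasis, hb, toLpLin_toLp,
        toLin'_apply, hψ, WithLp.toLp_smul]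
    · rwa [EuclideanSpace.inner_toLp_toLp, dotProduct_comm]
  simpa only [b.coe_toHilbertBasis, hb, EuclideanSpace.inner_toLp_toLp, dotProduct_comm]
    using (hasSum_fintype _).unique identity

end Matrix

/-- If `H_search = r•H + |w⟩⟨w|` admits an orthonormal eigenbasis `ψ` with real
eigenvalues `E` such that `E α ≠ r·λ i` for all `α, i`, `γ α = ⟨w, ψ α⟩`, and `a_n ≠ 0`, then
`∑ α, |γ α|²/(E α − r·λ_n) = 1`. -/
theorem initial_amplitude_identity
    (n : ℕ) (H : Matrix (Fin (n + 1)) (Fin (n + 1)) ℂ) (hH : H.IsHermitian)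
    (v : Fin (n + 1) → (Fin (n + 1) → ℂ)) (lam : Fin (n + 1) → ℝ)
    (hlam : Monotone lam)
    (hortho : ∀ i j, star (v i) ⬝ᵥ v j = if i = j then 1 else 0)
    (heig : ∀ i, H.mulVec (v i) = (lam i : ℂ) • v i)
    (w : Fin (n + 1) → ℂ) (hw : star w ⬝ᵥ w = 1)
    (a : Fin (n + 1) → ℂ) (ha : ∀ i, a i = star (v i) ⬝ᵥ w)
    (r : ℝ)
    (Hs : Matrix (Fin (n + 1)) (Fin (n + 1)) ℂ)
    (hHs : Hs = (r : ℂ) • H + Matrix.vecMulVec w (star w))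
    (ψ : Fin (n + 1) → (Fin (n + 1) → ℂ)) (E : Fin (n + 1) → ℝ)
    (horthoψ : ∀ α β, star (ψ α) ⬝ᵥ ψ β = if α = β then 1 else 0)
    (heigψ : ∀ α, Hs.mulVec (ψ α) = (E α : ℂ) • ψ α)
    (hEne : ∀ α i, E α ≠ r * lam i)
    (γ : Fin (n + 1) → ℂ) (hγ : ∀ α, γ α = star w ⬝ᵥ ψ α)
    (han : a (Fin.last n) ≠ 0) :
    ∑ α, ‖γ α‖ ^ 2 / (E α - r * lam (Fin.last n)) = 1 := by
  have heig_smul : ((r : ℂ) • H) *ᵥ v (Fin.last n) =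
      ((r * lam (Fin.last n) : ℝ) : ℂ) • v (Fin.last n) := by
    rw [smul_mulVec, heig, smul_smul, Complex.ofReal_mul]
  simp only [hγ]
  exact sum_norm_dotProduct_sq_div_sub_eq_one (hH.smul (Complex.conj_ofReal r)) heig_smul
    horthoψ (hHs ▸ heigψ) (hEne · _) (ha _ ▸ han)
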